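/- arXiv:1503.00918 — 3 statements merged into one kernel-verified Lean document; each statement's English description precedes it below -/
import Mathlib

section
/- For every c1, c2 ∈ K, the (c1,c2)-swapping bracket on Z(P) is a Poisson bracket: it is an antisymmetric biderivation in each argument and satisfies the Jacobi identity {a,{b,c}} + {b,{c,a}} + {c,{a,b}} = 0 for all a, b, c ∈ Z(P). -/
noncomputable section

open scoped Classical
open MvPolynomial

set_option maxHeartbeats 1000000
set_option synthInstance.maxHeartbeats 400000

instance fact01 : Fact ((0:ℝ) < 1) := ⟨one_pos⟩

/-- The circle, modelled as `ℝ/ℤ`. -/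
abbrev Circle1 : Type := AddCircle (1:ℝ)

/-- The coordinate in `[0,1)` of the point `x` of the circle obtained after removing the
point `o` and identifying the complement of `o` with an interval. -/
def coordAt (o x : Circle1) : ℝ := ((AddCircle.equivIco 1 0) (x - o) : ℝ)

/-- The sign `△` of a real number, as a rational number in `{-1, 0, 1}`. -/
def sgnQ (a : ℝ) : ℚ := if a < 0 then -1 else if a = 0 then 0 else 1

/-- The linking number `J(rx, sy)` of the chords `rx` and `sy`, computed using the
cut point `o`. -/
def linkingAt (o r x s y : Circle1) : ℚ :=
  (1/2) * (sgnQ (coordAt o r - coordAt o x) * sgnQ (coordAt o r - coordAt o y)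
        * sgnQ (coordAt o y - coordAt o x)
      - sgnQ (coordAt o r - coordAt o x) * sgnQ (coordAt o r - coordAt o s)
        * sgnQ (coordAt o s - coordAt o x))

lemma circle1_infinite : Infinite Circle1 := by
  have h : (Set.Ico (0:ℝ) (0+1)).Infinite := Set.Ico_infinite (by norm_num)
  haveI := h.to_subtype
  exact Infinite.of_injective (fun q : Set.Ico (0:ℝ) (0+1) => (AddCircle.equivIco 1 0).symm q)
    ((AddCircle.equivIco 1 0).symm.injective)

lemma exists_cut (r x s y : Circle1) :
    ∃ o : Circle1, o ≠ r ∧ o ≠ x ∧ o ≠ s ∧ o ≠ y := by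
  haveI : Infinite Circle1 := circle1_infinite
  have hfin : ({r, x, s, y} : Set Circle1).Finite :=
    (((Set.finite_singleton y).insert s).insert x).insert r
  obtain ⟨o, ho⟩ := hfin.infinite_compl.nonempty
  simp only [Set.mem_compl_iff, Set.mem_insert_iff, Set.mem_singleton_iff, not_or] at ho
  exact ⟨o, ho.1, ho.2.1, ho.2.2.1, ho.2.2.2⟩

/-- The linking number `J(rx, sy)` of the chords `rx` and `sy` (computed with respect to
some cut point distinct from the four points; by the independence of the choice this is
the linking number). -/
def linkQ (r x s y : Circle1) : ℚ := linkingAt (exists_cut r x s y).choose r x s y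

/-- The set of points of the circle `l`, listed in anticlockwise (cyclic) order:
there is a cut point `o` avoiding them such that the induced coordinates are
strictly increasing along the list. -/
def AnticlockwiseList (l : List Circle1) : Prop :=
  ∃ o : Circle1, (∀ p ∈ l, p ≠ o) ∧ (l.map (coordAt o)).Chain' (· < ·)

/-- Index type for the generators `xy` of the swapping ring of `P`
(one generator for each ordered pair of distinct points; the generators `xx`
are identified with `0`). -/
abbrev SwapIdx (P : Set Circle1) : Type := {q : (↥P) × (↥P) // q.1 ≠ q.2}

/-- The swapping ring `Z(P)`: the polynomial ring over `K` on the generators `xy`,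
`x ≠ y ∈ P` (this realizes the commutative ring generated by all ordered pairs `xy`
subject to the relations `xx = 0`). -/
abbrev SwapRing (K : Type) [Field K] (P : Set Circle1) : Type := MvPolynomial (SwapIdx P) K

/-- The generator `xy` of the swapping ring (equal to `0` when `x = y`). -/
def gen (K : Type) [Field K] (P : Set Circle1) (x y : ↥P) : SwapRing K P :=
  if h : x ≠ y then MvPolynomial.X (⟨(x, y), h⟩ : SwapIdx P) else 0

/-- The value of the `(c1,c2)`-swapping bracket on two generators `rx` and `sy`:
`J(rx,sy) • (c1 • ry·sx + c2 • rx·sy)`. -/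
def genBr (K : Type) [Field K] (P : Set Circle1) (c1 c2 : K) (g g' : SwapIdx P) :
    SwapRing K P :=
  ((linkQ g.1.1.1 g.1.2.1 g'.1.1.1 g'.1.2.1 : ℚ) : K) •
    (c1 • (gen K P g.1.1 g'.1.2 * gen K P g'.1.1 g.1.2)
      + c2 • (gen K P g.1.1 g.1.2 * gen K P g'.1.1 g'.1.2))

/-- The `(c1,c2)`-swapping bracket on `Z(P)`: the biderivation extending
`{rx, sy} = J(rx,sy)·(c1·ry·sx + c2·rx·sy)` by the Leibniz rule in each argument.
The swapping bracket is the case `c1 = 1, c2 = 0`. -/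
def swapBr (K : Type) [Field K] (P : Set Circle1) (c1 c2 : K) (a b : SwapRing K P) :
    SwapRing K P :=
  (MvPolynomial.mkDerivation K
    (fun g : SwapIdx P => (MvPolynomial.mkDerivation K (genBr K P c1 c2 g)) b)) a

/-- `Δ((x_1,…,x_m),(y_1,…,y_m)) = det (x_i y_j)` in the swapping ring. -/
def Dmat (K : Type) [Field K] (P : Set Circle1) (m : ℕ) (xs ys : Fin m → ↥P) :
    SwapRing K P :=
  Matrix.det (Matrix.of fun i j => gen K P (xs i) (ys j))

/-- The ideal `R_n(P)` of `Z(P)` generated by all `(n+1)×(n+1)` determinants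
`Δ((x_1,…,x_{n+1}),(y_1,…,y_{n+1}))`. -/
def Rideal (K : Type) [Field K] (P : Set Circle1) (n : ℕ) : Ideal (SwapRing K P) :=
  Ideal.span {D : SwapRing K P | ∃ xs ys : Fin (n+1) → ↥P, D = Dmat K P (n+1) xs ys}

/-- The rank `n` swapping ring `Z_n(P) = Z(P)/R_n(P)`. -/
abbrev ZnRing (K : Type) [Field K] (P : Set Circle1) (n : ℕ) : Type :=
  SwapRing K P ⧸ Rideal K P n

/-- The quotient map `Z(P) → Z_n(P)`. -/
def toZn (K : Type) [Field K] (P : Set Circle1) (n : ℕ) :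
    SwapRing K P →+* ZnRing K P n := Ideal.Quotient.mk (Rideal K P n)

/-- The total fraction ring `Q_n(P)` of the rank `n` swapping ring. -/
abbrev QnRing (K : Type) [Field K] (P : Set Circle1) (n : ℕ) : Type :=
  Localization (nonZeroDivisors (ZnRing K P n))

/-- The canonical map `Z(P) → Q_n(P)`. -/
def toQn (K : Type) [Field K] (P : Set Circle1) (n : ℕ) :
    SwapRing K P →+* QnRing K P n :=
  (algebraMap (ZnRing K P n) (QnRing K P n)).comp (toZn K P n)

/-- `Bq` is the extension to the total fraction ring `Q_n(P)` of the `(c1,c2)`-swapping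
bracket of the rank `n` swapping algebra: it agrees with the swapping bracket on the image
of `Z(P)` and satisfies the Leibniz rule in both arguments (these properties determine it
uniquely). -/
def IsQnBracket (K : Type) [Field K] (P : Set Circle1) (n : ℕ) (c1 c2 : K)
    (Bq : QnRing K P n → QnRing K P n → QnRing K P n) : Prop :=
  (∀ a b : SwapRing K P,
      Bq (toQn K P n a) (toQn K P n b) = toQn K P n (swapBr K P c1 c2 a b)) ∧
  (∀ a b c : QnRing K P n, Bq (a * b) c = a * Bq b c + b * Bq a c) ∧
  (∀ a b c : QnRing K P n, Bq a (b * c) = b * Bq a c + c * Bq a b)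

/-- The `n`-tuple `(x_1, …, x_a, y_1, …, y_b, z_1, …, z_{n-a-b})` built from three
families of points (families are indexed from `0`, i.e. `x 0 = x_1`). -/
def rows3 {α : Type*} {n : ℕ} (x y z : ℕ → α) (a b : ℕ) : Fin n → α :=
  fun i => if (i : ℕ) < a then x (i : ℕ)
    else if (i : ℕ) < a + b then y ((i : ℕ) - a)
    else z ((i : ℕ) - (a + b))

/-- The `n`-tuple `(x_1, …, x_a, y_1, …, y_b, z_1, …, z_{n-1-a-b}, w)` built from three
families of points and a final point `w`. -/
def rows3s {α : Type*} {n : ℕ} (x y z : ℕ → α) (a b : ℕ) (w : α) : Fin n → α :=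
  fun i => if (i : ℕ) < a then x (i : ℕ)
    else if (i : ℕ) < a + b then y ((i : ℕ) - a)
    else if (i : ℕ) < n - 1 then z ((i : ℕ) - (a + b))
    else w

/-- The `n`-tuple `(x_1, …, x_{n-1}, t)`. -/
def snocTup {α : Type*} {n : ℕ} (x : ℕ → α) (t : α) : Fin n → α :=
  fun i => if (i : ℕ) < n - 1 then x (i : ℕ) else t

/-- The list `f_a, f_{a-1}, …, f_1` (descending enumeration). -/
def descPts (f : ℕ → Circle1) (a : ℕ) : List Circle1 := ((List.range a).map f).reverse

/-- The list `f_1, f_2, …, f_a` (ascending enumeration). -/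
def ascPts (f : ℕ → Circle1) (a : ℕ) : List Circle1 := (List.range a).map f

/-- The `(n×n)`-determinant quotient `Δ(numR, v)/Δ(denR, v)` as an element of the total
fraction ring `Q_n(P)`. -/
def EQuot (K : Type) [Field K] (P : Set Circle1) (n : ℕ)
    (numR denR v : Fin n → ↥P)
    (h : toZn K P n (Dmat K P n denR v) ∈ nonZeroDivisors (ZnRing K P n)) :
    QnRing K P n :=
  Localization.mk (toZn K P n (Dmat K P n numR v)) ⟨toZn K P n (Dmat K P n denR v), h⟩


/-! Combinatorial part: signs of naturals. -/

/-- Sign of the difference of two naturals. -/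
def sgN (a b : ℕ) : ℤ := bif Nat.blt a b then -1 else bif Nat.blt b a then 1 else 0

def TN (r x y : ℕ) : ℤ := sgN r x * sgN r y * sgN y x

def JN (r x s y : ℕ) : ℤ := TN r x y - TN r x s

def AN (r x s y t z : ℕ) : ℤ :=
  JN s y t z * JN r x t y + JN t z r x * JN s y r z + JN r x s y * JN t z s x

def BN (r x s y t z : ℕ) : ℤ :=
  JN s y t z * JN r x s z + JN t z r x * JN s y t x + JN r x s y * JN t z r y

def checkN (r x s y t z : ℕ) : Bool :=
  ((Nat.beq s z || Nat.beq r y || Nat.beq t x || decide (AN r x s y t z = 0)) &&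
   (Nat.beq t y || Nat.beq r z || Nat.beq s x || decide (BN r x s y t z = 0))) ||
  (decide (AN r x s y t z + BN r x s y t z = 0) &&
  ((Nat.beq r s && Nat.beq s t) || (Nat.beq x y && Nat.beq y z) ||
  (Nat.beq r s && Nat.beq x y) || (Nat.beq s t && Nat.beq y z) ||
  (Nat.beq r t && Nat.beq x z)))

/-- The value `v` is a nonzero rank whose predecessor is not among the ranks. -/
def gap (v x s y t z : ℕ) : Bool :=
  bif Nat.ble v 1 then false else
    !(Nat.beq (x + 1) v || Nat.beq (s + 1) v || Nat.beq (y + 1) v || Nat.beq (t + 1) v ||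
      Nat.beq (z + 1) v)

def checkAll : Bool :=
  [1, 2, 3, 4, 5].all fun x => [0, 1, 2, 3, 4, 5].all fun s => [0, 1, 2, 3, 4, 5].all fun y =>
  bif Nat.beq s y then true else
  [0, 1, 2, 3, 4, 5].all fun t => [0, 1, 2, 3, 4, 5].all fun z =>
    bif Nat.beq t z then true else
    bif gap x x s y t z || gap s x s y t z || gap y x s y t z || gap t x s y t z || gap z x s y t z
    then true else checkN 0 x s y t z

lemma checkAll_true : checkAll = true := by decide +kernel

def checkAnti : Bool :=
  (List.range 6).all fun x => (List.range 6).all fun s => (List.range 6).all fun y =>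
    decide (JN 0 x s y = - JN s y 0 x)

lemma checkAnti_true : checkAnti = true := by decide +kernel

lemma anti_nat (x s y : ℕ) (hx : x < 6) (hs : s < 6) (hy : y < 6) :
    JN 0 x s y = - JN s y 0 x := by
  have h := checkAnti_true
  simp only [checkAnti, List.all_eq_true, List.mem_range, decide_eq_true_eq] at h
  exact h x hx s hs y hy

lemma check_nat (x s y t z : ℕ) (hx : x < 6) (hs : s < 6) (hy : y < 6) (ht : t < 6) (hz : z < 6)
    (gx : gap x x s y t z = false) (gs : gap s x s y t z = false) (gy : gap y x s y t z = false)
    (gt : gap t x s y t z = false) (gz : gap z x s y t z = false) :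
    x = 0 ∨ s = y ∨ t = z ∨
    (((s = z ∨ 0 = y ∨ t = x ∨ AN 0 x s y t z = 0) ∧
      (t = y ∨ 0 = z ∨ s = x ∨ BN 0 x s y t z = 0)) ∨
     (AN 0 x s y t z + BN 0 x s y t z = 0 ∧
      ((0 = s ∧ s = t) ∨ (x = y ∧ y = z) ∨ (0 = s ∧ x = y) ∨ (s = t ∧ y = z) ∨
        (0 = t ∧ x = z)))) := by
  have h := checkAll_true
  have m : ∀ v, v < 6 → v ∈ [0, 1, 2, 3, 4, 5] := by intro v hv; interval_cases v <;> simp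
  have m' : ∀ v, v < 6 → v ≠ 0 → v ∈ [1, 2, 3, 4, 5] := by
    intro v hv h0; interval_cases v <;> simp at h0 ⊢
  simp only [checkAll, List.all_eq_true] at h
  by_cases hx0 : x = 0
  · exact Or.inl hx0
  by_cases hsy : s = y
  · exact Or.inr (Or.inl hsy)
  by_cases htz : t = z
  · exact Or.inr (Or.inr (Or.inl htz))
  refine Or.inr (Or.inr (Or.inr ?_))
  have bsy : Nat.beq s y = false := by rw [← Bool.not_eq_true, Nat.beq_eq]; exact hsy
  have btz : Nat.beq t z = false := by rw [← Bool.not_eq_true, Nat.beq_eq]; exact htz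
  have h0 := h x (m' x hx hx0) s (m s hs) y (m y hy)
  simp only [bsy, cond_false, List.all_eq_true] at h0
  have h1 := h0 t (m t ht) z (m z hz)
  simp only [btz, gx, gs, gy, gt, gz, Bool.or_false, cond_false] at h1
  simpa only [checkN, Bool.or_eq_true, Bool.and_eq_true, Nat.beq_eq, decide_eq_true_eq, or_assoc]
    using h1

/-! Ranks. -/

def rk (S : Finset ℝ) (a : ℝ) : ℕ := (S.filter (· < a)).card

lemma rk_lt (S : Finset ℝ) {a b : ℝ} (ha : a ∈ S) (h : a < b) : rk S a < rk S b := by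
  apply Finset.card_lt_card
  rw [Finset.ssubset_iff_of_subset]
  · exact ⟨a, by simp [ha, h], by simp⟩
  · intro c hc
    simp only [Finset.mem_filter] at hc ⊢
    exact ⟨hc.1, hc.2.trans h⟩

lemma rk_inj (S : Finset ℝ) {a b : ℝ} (ha : a ∈ S) (hb : b ∈ S) (h : rk S a = rk S b) : a = b := by
  rcases lt_trichotomy a b with h1 | h1 | h1
  · have := rk_lt S ha h1; omega
  · exact h1
  · have := rk_lt S hb h1; omega

lemma rk_lt_card (S : Finset ℝ) {a : ℝ} (ha : a ∈ S) : rk S a < S.card := by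
  apply Finset.card_lt_card
  rw [Finset.ssubset_iff_of_subset (Finset.filter_subset _ _)]
  exact ⟨a, ha, by simp⟩

lemma rk_sgn (S : Finset ℝ) {a b : ℝ} (ha : a ∈ S) (hb : b ∈ S) :
    sgnQ (a - b) = (sgN (rk S a) (rk S b) : ℚ) := by
  unfold sgnQ sgN
  rcases lt_trichotomy a b with h | h | h
  · have h1 := rk_lt S ha h
    have h2 : Nat.blt (rk S a) (rk S b) = true := by rw [Nat.blt_eq]; exact h1
    rw [h2, if_pos (by linarith)]
    simp
  · subst h
    have h2 : Nat.blt (rk S a) (rk S a) = false := by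
      rw [← Bool.not_eq_true, Nat.blt_eq]; exact lt_irrefl _
    rw [h2]
    simp
  · have h1 := rk_lt S hb h
    have h2 : Nat.blt (rk S b) (rk S a) = true := by rw [Nat.blt_eq]; exact h1
    have h3 : Nat.blt (rk S a) (rk S b) = false := by
      rw [← Bool.not_eq_true, Nat.blt_eq]; omega
    rw [h2, h3, if_neg (by linarith), if_neg (by linarith)]
    simp

lemma rk_pred (S : Finset ℝ) {a : ℝ} (h : rk S a ≠ 0) : ∃ b ∈ S, rk S b + 1 = rk S a := by
  have hne : (S.filter (· < a)).Nonempty := by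
    rw [← Finset.card_pos]; exact Nat.pos_of_ne_zero h
  obtain ⟨b, hb, hmax⟩ := Finset.exists_max_image _ id hne
  simp only [Finset.mem_filter, id] at hb hmax
  refine ⟨b, hb.1, ?_⟩
  unfold rk
  rw [← Finset.card_insert_of_notMem (s := S.filter (· < b)) (a := b) (by simp)]
  congr 1
  ext c
  simp only [Finset.mem_insert, Finset.mem_filter]
  constructor
  · rintro (h | h)
    · rw [h]; exact hb
    · exact ⟨h.1, h.2.trans hb.2⟩
  · intro h
    rcases (hmax c h).lt_or_eq with h' | h'
    · exact Or.inr ⟨h.1, h'⟩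
    · exact Or.inl h'

/-! Independence of the cut. -/

lemma coordAt_mem (o x : Circle1) : 0 ≤ coordAt o x ∧ coordAt o x < 1 := by
  have h := ((AddCircle.equivIco 1 0) (x - o)).2
  simp only [Set.mem_Ico, zero_add] at h
  exact h

lemma coordAt_coe (o x : Circle1) : ((coordAt o x : ℝ) : Circle1) = x - o :=
  AddCircle.coe_equivIco

lemma coordAt_inj (o : Circle1) {x y : Circle1} (h : coordAt o x = coordAt o y) : x = y := by
  have h1 := coordAt_coe o x
  rw [h, coordAt_coe] at h1
  exact (sub_left_inj.mp h1).symm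

lemma coordAt_self (o : Circle1) : coordAt o o = 0 := by
  have h : ((coordAt o o : ℝ) : Circle1) = ((0:ℝ) : Circle1) := by
    rw [coordAt_coe]; simp
  rwa [AddCircle.coe_eq_coe_iff_of_mem_Ico (p := (1:ℝ)) (a := 0)] at h
  · simpa using coordAt_mem o o
  · simp

lemma coordAt_shift (o o' x : Circle1) :
    coordAt o' x = coordAt o x + coordAt o' o ∨ coordAt o' x = coordAt o x + coordAt o' o - 1 := by
  have h1 := coordAt_mem o x
  have h2 := coordAt_mem o' o
  have h3 := coordAt_mem o' x
  have key : ((coordAt o' x : ℝ) : Circle1) = ((coordAt o x + coordAt o' o : ℝ) : Circle1) := by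
    rw [AddCircle.coe_add, coordAt_coe, coordAt_coe, coordAt_coe]; abel
  by_cases h : coordAt o x + coordAt o' o < 1
  · left
    rwa [AddCircle.coe_eq_coe_iff_of_mem_Ico (p := (1:ℝ)) (a := 0)] at key
    · simpa using h3
    · simp only [zero_add, Set.mem_Ico]; constructor <;> linarith
  · right
    have key2 : ((coordAt o' x : ℝ) : Circle1)
        = ((coordAt o x + coordAt o' o - 1 : ℝ) : Circle1) := by
      rw [AddCircle.coe_sub, key, AddCircle.coe_period, sub_zero]
    rwa [AddCircle.coe_eq_coe_iff_of_mem_Ico (p := (1:ℝ)) (a := 0)] at key2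
    · simpa using h3
    · simp only [zero_add, Set.mem_Ico]; constructor <;> linarith

lemma sgnQ_neg' {a : ℝ} (h : a < 0) : sgnQ a = -1 := by simp [sgnQ, h]

lemma sgnQ_pos' {a : ℝ} (h : 0 < a) : sgnQ a = 1 := by
  simp [sgnQ, h.not_gt, h.ne']

lemma sgnQ_zero' : sgnQ 0 = 0 := by simp [sgnQ]

lemma exists_flip (o o' : Circle1) : ∃ e : Circle1 → ℚ, (∀ x, e x * e x = 1) ∧
    ∀ x y, sgnQ (coordAt o' x - coordAt o' y) = e x * e y * sgnQ (coordAt o x - coordAt o y) := by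
  refine ⟨fun x => if coordAt o' x = coordAt o x + coordAt o' o then 1 else -1, ?_, ?_⟩
  · intro x; dsimp only; split_ifs <;> norm_num
  · intro x y
    dsimp only
    have hx := coordAt_mem o x
    have hy := coordAt_mem o y
    have hx' := coordAt_mem o' x
    have hy' := coordAt_mem o' y
    split_ifs with h1 h2 h2
    · rw [h1, h2]; simp
    · have h2' := (coordAt_shift o o' y).resolve_left h2
      rw [sgnQ_pos' (by linarith), sgnQ_neg' (by linarith)]; norm_num
    · have h1' := (coordAt_shift o o' x).resolve_left h1
      rw [sgnQ_neg' (by linarith), sgnQ_pos' (by linarith)]; norm_num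
    · have h1' := (coordAt_shift o o' x).resolve_left h1
      have h2' := (coordAt_shift o o' y).resolve_left h2
      rw [h1', h2']; simp

lemma linkingAt_indep (o o' r x s y : Circle1) : linkingAt o' r x s y = linkingAt o r x s y := by
  obtain ⟨e, he, h⟩ := exists_flip o o'
  unfold linkingAt
  simp only [h]
  have e1 : ∀ (p q w : Circle1) (A B C : ℚ),
      e p * e q * A * (e p * e w * B) * (e w * e q * C) = A * B * C := by
    intro p q w A B C
    calc _ = (e p * e p) * (e q * e q) * (e w * e w) * (A * B * C) := by ring
      _ = _ := by rw [he, he, he]; ring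
  rw [e1, e1]

lemma linkQ_eq (o r x s y : Circle1) : linkQ r x s y = linkingAt o r x s y :=
  linkingAt_indep _ _ _ _ _ _

lemma linkQ_nat (o : Circle1) (S : Finset ℝ) (r x s y : Circle1)
    (hr : coordAt o r ∈ S) (hx : coordAt o x ∈ S) (hs : coordAt o s ∈ S) (hy : coordAt o y ∈ S) :
    linkQ r x s y = (1/2) * (JN (rk S (coordAt o r)) (rk S (coordAt o x)) (rk S (coordAt o s))
      (rk S (coordAt o y)) : ℚ) := by
  rw [linkQ_eq o]
  unfold linkingAt JN TN
  rw [rk_sgn S hr hx, rk_sgn S hr hy, rk_sgn S hy hx, rk_sgn S hr hs, rk_sgn S hs hx]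
  push_cast
  ring

lemma rk_zero (r : Circle1) (S : Finset ℝ) (hS : ∀ a ∈ S, 0 ≤ a) : rk S (coordAt r r) = 0 := by
  rw [coordAt_self]
  unfold rk
  rw [Finset.card_eq_zero, Finset.filter_eq_empty_iff]
  intro a ha
  exact not_lt.mpr (hS a ha)

lemma linkQ_anti (r x s y : Circle1) : linkQ r x s y = - linkQ s y r x := by
  let S : Finset ℝ := {coordAt r r, coordAt r x, coordAt r s, coordAt r y}
  have hr : coordAt r r ∈ S := by simp [S]
  have hx : coordAt r x ∈ S := by simp [S]
  have hs : coordAt r s ∈ S := by simp [S]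
  have hy : coordAt r y ∈ S := by simp [S]
  have hS : ∀ a ∈ S, 0 ≤ a := by
    intro a ha
    simp only [S, Finset.mem_insert, Finset.mem_singleton] at ha
    rcases ha with h | h | h | h <;> rw [h] <;> exact (coordAt_mem _ _).1
  have hc : S.card ≤ 4 := Finset.card_le_four
  have l := fun {a : ℝ} (h : a ∈ S) => (rk_lt_card S h).trans_le (hc.trans (by norm_num : 4 ≤ 6))
  rw [linkQ_nat r S r x s y hr hx hs hy, linkQ_nat r S s y r x hs hy hr hx, rk_zero r S hS,
    anti_nat _ _ _ (l hx) (l hs) (l hy)]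
  push_cast
  ring

lemma linkQ_add (r x s y t z : Circle1) :
    linkQ r x t y + linkQ r x s z = linkQ r x t z + linkQ r x s y := by
  simp only [linkQ_eq 0]
  unfold linkingAt
  ring

lemma linkQ_self (r s y : Circle1) : linkQ r r s y = 0 := by
  rw [linkQ_eq 0]; unfold linkingAt; simp [sgnQ_zero']

lemma linkQ_self' (r s y : Circle1) : linkQ s y r r = 0 := by
  rw [linkQ_anti, linkQ_self, neg_zero]

def AQ (r x s y t z : Circle1) : ℚ :=
  linkQ s y t z * linkQ r x t y + linkQ t z r x * linkQ s y r z + linkQ r x s y * linkQ t z s x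

def BQ (r x s y t z : Circle1) : ℚ :=
  linkQ s y t z * linkQ r x s z + linkQ t z r x * linkQ s y t x + linkQ r x s y * linkQ t z r y

lemma check_circle (r x s y t z : Circle1) :
    x = r ∨ s = y ∨ t = z ∨
    (((s = z ∨ r = y ∨ t = x ∨ AQ r x s y t z = 0) ∧
      (t = y ∨ r = z ∨ s = x ∨ BQ r x s y t z = 0)) ∨
     (AQ r x s y t z + BQ r x s y t z = 0 ∧
      ((r = s ∧ s = t) ∨ (x = y ∧ y = z) ∨ (r = s ∧ x = y) ∨ (s = t ∧ y = z) ∨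
        (r = t ∧ x = z)))) := by
  let S : Finset ℝ := {coordAt r r, coordAt r x, coordAt r s, coordAt r y, coordAt r t, coordAt r z}
  have hr : coordAt r r ∈ S := by simp [S]
  have hx : coordAt r x ∈ S := by simp [S]
  have hs : coordAt r s ∈ S := by simp [S]
  have hy : coordAt r y ∈ S := by simp [S]
  have ht : coordAt r t ∈ S := by simp [S]
  have hz : coordAt r z ∈ S := by simp [S]
  have hS : ∀ a ∈ S, 0 ≤ a := by
    intro a ha
    simp only [S, Finset.mem_insert, Finset.mem_singleton] at ha
    rcases ha with h | h | h | h | h | h <;> rw [h] <;> exact (coordAt_mem _ _).1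
  have hc : S.card ≤ 6 := Finset.card_le_six
  have l := fun {a : ℝ} (h : a ∈ S) => (rk_lt_card S h).trans_le hc
  have inj : ∀ {p q : Circle1}, coordAt r p ∈ S → coordAt r q ∈ S →
      (rk S (coordAt r p) = rk S (coordAt r q) ↔ p = q) := fun hp hq =>
    ⟨fun h => coordAt_inj r (rk_inj S hp hq h), fun h => by rw [h]⟩
  have g : ∀ a, gap (rk S a) (rk S (coordAt r x)) (rk S (coordAt r s)) (rk S (coordAt r y))
      (rk S (coordAt r t)) (rk S (coordAt r z)) = false := by
    intro a
    unfold gap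
    by_cases h1 : Nat.ble (rk S a) 1 = true
    · rw [h1]; rfl
    · have h2 : ¬ rk S a ≤ 1 := by rwa [Nat.ble_eq] at h1
      rw [Bool.not_eq_true] at h1
      rw [h1]
      obtain ⟨b, hb, hb1⟩ := rk_pred S (a := a) (by omega)
      simp only [S, Finset.mem_insert, Finset.mem_singleton] at hb
      rw [cond_false, Bool.not_eq_false']
      simp only [Bool.or_eq_true, Nat.beq_eq, or_assoc]
      rcases hb with h | h | h | h | h | h <;> rw [h] at hb1
      · rw [rk_zero r S hS] at hb1; omega
      · exact Or.inl hb1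
      · exact Or.inr (Or.inl hb1)
      · exact Or.inr (Or.inr (Or.inl hb1))
      · exact Or.inr (Or.inr (Or.inr (Or.inl hb1)))
      · exact Or.inr (Or.inr (Or.inr (Or.inr hb1)))
  have key := check_nat _ _ _ _ _ (l hx) (l hs) (l hy) (l ht) (l hz) (g _) (g _) (g _) (g _) (g _)
  rw [← rk_zero r S hS] at key
  have hA : AQ r x s y t z = (1/4) * (AN (rk S (coordAt r r)) (rk S (coordAt r x))
      (rk S (coordAt r s)) (rk S (coordAt r y)) (rk S (coordAt r t)) (rk S (coordAt r z)) : ℚ) := by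
    unfold AQ AN
    simp only [linkQ_nat r S _ _ _ _ hr hx, linkQ_nat r S _ _ _ _ hs hy,
      linkQ_nat r S _ _ _ _ ht hz, hr, hx, hs, hy, ht, hz]
    push_cast
    ring
  have hB : BQ r x s y t z = (1/4) * (BN (rk S (coordAt r r)) (rk S (coordAt r x))
      (rk S (coordAt r s)) (rk S (coordAt r y)) (rk S (coordAt r t)) (rk S (coordAt r z)) : ℚ) := by
    unfold BQ BN
    simp only [linkQ_nat r S _ _ _ _ hr hx, linkQ_nat r S _ _ _ _ hs hy,
      linkQ_nat r S _ _ _ _ ht hz, hr, hx, hs, hy, ht, hz]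
    push_cast
    ring
  have hA0 : AQ r x s y t z = 0 ↔ AN (rk S (coordAt r r)) (rk S (coordAt r x))
      (rk S (coordAt r s)) (rk S (coordAt r y)) (rk S (coordAt r t)) (rk S (coordAt r z)) = 0 := by
    rw [hA]; simp
  have hB0 : BQ r x s y t z = 0 ↔ BN (rk S (coordAt r r)) (rk S (coordAt r x))
      (rk S (coordAt r s)) (rk S (coordAt r y)) (rk S (coordAt r t)) (rk S (coordAt r z)) = 0 := by
    rw [hB]; simp
  have hAB0 : AQ r x s y t z + BQ r x s y t z = 0 ↔ AN (rk S (coordAt r r)) (rk S (coordAt r x))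
      (rk S (coordAt r s)) (rk S (coordAt r y)) (rk S (coordAt r t)) (rk S (coordAt r z)) +
      BN (rk S (coordAt r r)) (rk S (coordAt r x))
      (rk S (coordAt r s)) (rk S (coordAt r y)) (rk S (coordAt r t)) (rk S (coordAt r z)) = 0 := by
    rw [hA, hB, ← mul_add]
    simp only [mul_eq_zero]
    norm_num
    norm_cast
  rw [hA0, hB0, hAB0]
  rw [inj hx hr, inj hs hy, inj ht hz, inj hs hz, inj hr hy, inj ht hx, inj ht hy, inj hr hz,
    inj hs hx, inj hr hs, inj hs ht, inj hx hy, inj hy hz, inj hr ht, inj hx hz] at key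
  exact key

/-! The bracket. -/

section bracket

variable {K : Type} [Field K] {P : Set Circle1} {c1 c2 : K}

lemma gen_self (x : ↥P) : gen K P x x = 0 := by simp [gen]

lemma gen_of_ne {x y : ↥P} (h : x ≠ y) : gen K P x y = X (⟨(x, y), h⟩ : SwapIdx P) := by
  simp [gen, h]

lemma br_add_left (a b c : SwapRing K P) :
    swapBr K P c1 c2 (a + b) c = swapBr K P c1 c2 a c + swapBr K P c1 c2 b c := by
  simp [swapBr]

lemma br_C_left (k : K) (c : SwapRing K P) : swapBr K P c1 c2 (C k) c = 0 := by
  simp [swapBr]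

lemma br_mul_left (a b c : SwapRing K P) :
    swapBr K P c1 c2 (a * b) c = a * swapBr K P c1 c2 b c + b * swapBr K P c1 c2 a c := by
  simp [swapBr, Derivation.leibniz]

lemma br_X_left (g : SwapIdx P) (c : SwapRing K P) :
    swapBr K P c1 c2 (X g) c = mkDerivation K (genBr K P c1 c2 g) c := by
  simp [swapBr]

lemma br_add_right (a b c : SwapRing K P) :
    swapBr K P c1 c2 a (b + c) = swapBr K P c1 c2 a b + swapBr K P c1 c2 a c := by
  induction a using MvPolynomial.induction_on with
  | C k => simp [br_C_left]
  | add p q hp hq => rw [br_add_left, br_add_left, br_add_left, hp, hq]; ring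
  | mul_X p g hp =>
    simp only [br_mul_left, hp, br_X_left, map_add]; ring

lemma br_C_right (a : SwapRing K P) (k : K) :
    swapBr K P c1 c2 a (C k) = 0 := by
  induction a using MvPolynomial.induction_on with
  | C k => simp [br_C_left]
  | add p q hp hq => rw [br_add_left, hp, hq]; ring
  | mul_X p g hp =>
    rw [br_mul_left, hp, br_X_left]; simp

lemma br_mul_right (a b c : SwapRing K P) :
    swapBr K P c1 c2 a (b * c) = b * swapBr K P c1 c2 a c + c * swapBr K P c1 c2 a b := by
  induction a using MvPolynomial.induction_on with
  | C k => simp [br_C_left]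
  | add p q hp hq => rw [br_add_left, br_add_left, br_add_left, hp, hq]; ring
  | mul_X p g hp =>
    simp only [br_mul_left, hp, br_X_left, Derivation.leibniz, smul_eq_mul]; ring

lemma br_X_X (g h : SwapIdx P) :
    swapBr K P c1 c2 (X g) (X h) = genBr K P c1 c2 g h := by
  rw [br_X_left, mkDerivation_X]

/-- The linking number as a constant of the swapping ring. -/
def lk (K : Type) [Field K] (P : Set Circle1) (r x s y : ↥P) : SwapRing K P :=
  C ((linkQ r.1 x.1 s.1 y.1 : ℚ) : K)

lemma br_gen (r x s y : ↥P) :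
    swapBr K P c1 c2 (gen K P r x) (gen K P s y) =
      lk K P r x s y * (C c1 * (gen K P r y * gen K P s x) +
        C c2 * (gen K P r x * gen K P s y)) := by
  by_cases h1 : r = x
  · subst h1
    rw [gen_self, lk, linkQ_self, ← C_0, br_C_left]; simp
  by_cases h2 : s = y
  · subst h2
    rw [gen_self, lk, linkQ_self', ← C_0, br_C_right]; simp
  rw [gen_of_ne h1, gen_of_ne h2, br_X_X, genBr, lk]
  simp only [MvPolynomial.smul_eq_C_mul]
  rw [gen_of_ne h1, gen_of_ne h2]

variable [CharZero K]

lemma lk_anti (r x s y : ↥P) : lk K P r x s y = - lk K P s y r x := by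
  rw [lk, lk, linkQ_anti, ← C_neg]; push_cast; rfl

lemma lk_add (r x s y t z : ↥P) :
    lk K P r x t y + lk K P r x s z = lk K P r x t z + lk K P r x s y := by
  simp only [lk, ← C_add]
  congr 1
  exact_mod_cast congrArg (fun q : ℚ => (q : K)) (linkQ_add r.1 x.1 s.1 y.1 t.1 z.1)

lemma br_anti (a b : SwapRing K P) : swapBr K P c1 c2 a b = - swapBr K P c1 c2 b a := by
  induction a using MvPolynomial.induction_on with
  | C k => simp [br_C_left, br_C_right]
  | add p q hp hq => rw [br_add_left, br_add_right, hp, hq]; ring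
  | mul_X p g hp =>
    rw [br_mul_left, br_mul_right, hp]
    suffices h : swapBr K P c1 c2 (X g) b = - swapBr K P c1 c2 b (X g) by rw [h]; ring
    clear hp
    induction b using MvPolynomial.induction_on with
    | C k => simp [br_C_left, br_C_right]
    | add p q hp hq => rw [br_add_left, br_add_right, hp, hq]; ring
    | mul_X p h hp =>
      have hX : swapBr K P c1 c2 (X g) (X h) = - swapBr K P c1 c2 (X h) (X g) := by
        obtain ⟨⟨r, x⟩, h1⟩ := g
        obtain ⟨⟨s, y⟩, h2⟩ := h
        rw [← gen_of_ne h1, ← gen_of_ne h2, br_gen, br_gen, lk_anti]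
        ring
      rw [br_mul_left, br_mul_right, hp, hX]; ring

lemma cubic (r x s y t z : ↥P) (h1 : r ≠ x) (h2 : s ≠ y) (h3 : t ≠ z) :
    (lk K P s y t z * lk K P r x t y + lk K P t z r x * lk K P s y r z
        + lk K P r x s y * lk K P t z s x) * (gen K P s z * gen K P r y * gen K P t x)
    + (lk K P s y t z * lk K P r x s z + lk K P t z r x * lk K P s y t x
        + lk K P r x s y * lk K P t z r y) * (gen K P t y * gen K P r z * gen K P s x) = 0 := by
  have eA : lk K P s y t z * lk K P r x t y + lk K P t z r x * lk K P s y r z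
        + lk K P r x s y * lk K P t z s x = C ((AQ r x s y t z : ℚ) : K) := by
    simp only [lk, AQ, ← C_mul, ← C_add]; push_cast; rfl
  have eB : lk K P s y t z * lk K P r x s z + lk K P t z r x * lk K P s y t x
        + lk K P r x s y * lk K P t z r y = C ((BQ r x s y t z : ℚ) : K) := by
    simp only [lk, BQ, ← C_mul, ← C_add]; push_cast; rfl
  rw [eA, eB]
  rcases check_circle r.1 x.1 s.1 y.1 t.1 z.1 with h | h | h | ⟨hA, hB⟩ | ⟨hAB, h⟩
  · exact absurd (Subtype.ext h).symm h1
  · exact absurd (Subtype.ext h) h2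
  · exact absurd (Subtype.ext h) h3
  · have hA' : C ((AQ r x s y t z : ℚ) : K) * (gen K P s z * gen K P r y * gen K P t x) = 0 := by
      rcases hA with h | h | h | h
      · rw [Subtype.ext h, gen_self]; ring
      · rw [Subtype.ext h, gen_self]; ring
      · rw [Subtype.ext h, gen_self]; ring
      · rw [h]; simp
    have hB' : C ((BQ r x s y t z : ℚ) : K) * (gen K P t y * gen K P r z * gen K P s x) = 0 := by
      rcases hB with h | h | h | h
      · rw [Subtype.ext h, gen_self]; ring
      · rw [Subtype.ext h, gen_self]; ring
      · rw [Subtype.ext h, gen_self]; ring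
      · rw [h]; simp
    rw [hA', hB', add_zero]
  · have hm : gen K P t y * gen K P r z * gen K P s x
        = gen K P s z * gen K P r y * gen K P t x := by
      rcases h with ⟨h, h'⟩ | ⟨h, h'⟩ | ⟨h, h'⟩ | ⟨h, h'⟩ | ⟨h, h'⟩ <;>
      · have e := Subtype.ext h
        have e' := Subtype.ext h'
        subst e
        subst e'
        ring
    rw [hm, ← add_mul, ← C_add, ← Rat.cast_add, hAB]
    simp

lemma jacobi_gen (r x s y t z : ↥P) (h1 : r ≠ x) (h2 : s ≠ y) (h3 : t ≠ z) :
    swapBr K P c1 c2 (gen K P r x) (swapBr K P c1 c2 (gen K P s y) (gen K P t z))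
    + swapBr K P c1 c2 (gen K P s y) (swapBr K P c1 c2 (gen K P t z) (gen K P r x))
    + swapBr K P c1 c2 (gen K P t z) (swapBr K P c1 c2 (gen K P r x) (gen K P s y)) = 0 := by
  have hC : ∀ (p q u v : ↥P) (a : SwapRing K P), swapBr K P c1 c2 a (lk K P p q u v) = 0 :=
    fun p q u v a => br_C_right a _
  simp only [br_gen, br_mul_right, br_add_right, br_C_right, hC]
  have hAB := cubic (K := K) r x s y t z h1 h2 h3
  have a1 := lk_add (K := K) r x s y t z
  have a2 := lk_add (K := K) s y t z r x
  have a3 := lk_add (K := K) t z r x s y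
  rw [lk_anti r x t z] at a1 ⊢
  rw [lk_anti s y r x] at a2 ⊢
  rw [lk_anti t z s y] at a3 ⊢
  linear_combination (C c1) ^ 2 * hAB + C c1 * C c2 *
    (lk K P s y t z * gen K P r x * gen K P s z * gen K P t y * a1
    + lk K P t z r x * gen K P s y * gen K P t x * gen K P r z * a2
    + lk K P r x s y * gen K P t z * gen K P r y * gen K P s x * a3)

/-- The Jacobiator. -/
def jac (K : Type) [Field K] (P : Set Circle1) (c1 c2 : K) (a b c : SwapRing K P) :
    SwapRing K P :=
  swapBr K P c1 c2 a (swapBr K P c1 c2 b c)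
        + swapBr K P c1 c2 b (swapBr K P c1 c2 c a)
        + swapBr K P c1 c2 c (swapBr K P c1 c2 a b)

lemma jac_cyc (a b c : SwapRing K P) : jac K P c1 c2 a b c = jac K P c1 c2 b c a := by
  unfold jac; ring

lemma br_zero_right (a : SwapRing K P) : swapBr K P c1 c2 a 0 = 0 := by
  have h := br_C_right (c1 := c1) (c2 := c2) a 0
  rwa [C_0] at h

lemma jac_ind (b c : SwapRing K P) (h : ∀ g, jac K P c1 c2 (X g) b c = 0) (a : SwapRing K P) :
    jac K P c1 c2 a b c = 0 := by
  induction a using MvPolynomial.induction_on with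
  | C k => simp [jac, br_C_left, br_C_right, br_zero_right]
  | add p q hp hq =>
    unfold jac at *
    simp only [br_add_left, br_add_right]
    linear_combination hp + hq
  | mul_X p g hp =>
    have hg := h g
    unfold jac at *
    simp only [br_mul_left, br_mul_right, br_add_right]
    have e1 := br_anti (c1 := c1) (c2 := c2) p b
    have e3 := br_anti (c1 := c1) (c2 := c2) (X g) b
    linear_combination p * hg + X g * hp + swapBr K P c1 c2 c (X g) * e1
      + swapBr K P c1 c2 c p * e3

end bracket

/-- For every `c1, c2 ∈ K`, the `(c1,c2)`-swapping bracket on `Z(P)` is a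
Poisson bracket: it is antisymmetric, a derivation (Leibniz rule) in each argument, and it
satisfies the Jacobi identity. -/
theorem swapping_bracket_is_poisson (K : Type) [Field K] [CharZero K]
    (P : Set Circle1) (c1 c2 : K) :
    (∀ a b : SwapRing K P, swapBr K P c1 c2 a b = - swapBr K P c1 c2 b a) ∧
    (∀ a b c : SwapRing K P,
      swapBr K P c1 c2 (a * b) c
        = a * swapBr K P c1 c2 b c + b * swapBr K P c1 c2 a c) ∧
    (∀ a b c : SwapRing K P,
      swapBr K P c1 c2 a (b * c)
        = b * swapBr K P c1 c2 a c + c * swapBr K P c1 c2 a b) ∧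
    (∀ a b c : SwapRing K P,
      swapBr K P c1 c2 a (swapBr K P c1 c2 b c)
        + swapBr K P c1 c2 b (swapBr K P c1 c2 c a)
        + swapBr K P c1 c2 c (swapBr K P c1 c2 a b) = 0) := by
  refine ⟨br_anti, br_mul_left, br_mul_right, ?_⟩
  intro a b c
  change jac K P c1 c2 a b c = 0
  refine jac_ind b c (fun g => ?_) a
  rw [jac_cyc]
  refine jac_ind c (X g) (fun h => ?_) b
  rw [jac_cyc]
  refine jac_ind (X g) (X h) (fun k => ?_) c
  obtain ⟨⟨r, x⟩, h1⟩ := g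
  obtain ⟨⟨s, y⟩, h2⟩ := h
  obtain ⟨⟨t, z⟩, h3⟩ := k
  rw [← gen_of_ne h1, ← gen_of_ne h2, ← gen_of_ne h3]
  exact jacobi_gen t z r x s y h3 h1 h2

end
end

section
/- Let n ≥ 2, let x_1,…,x_{n+1} ∈ P (respectively y_1,…,y_{n+1} ∈ P) be pairwise distinct points ordered anticlockwise, and let a, b ∈ P. Suppose that exactly the points x_1,…,x_l and y_1,…,y_k lie on the right side of the oriented chord from a to b (where lying on the right side includes possibly coinciding with a or b), while the remaining x_i and y_j lie strictly on the left side, and let u be any point strictly on the left side of this chord. Then, with respect to the swapping bracket, {ab, Δ((x_1,…,x_{n+1}),(y_1,…,y_{n+1}))} = Σ_{d=1}^{l} J(ab, x_d u)·x_d b·Δ((x_1,…,x_{d−1}, a, x_{d+1},…,x_{n+1}),(y_1,…,y_{n+1})) + Σ_{d=1}^{k} J(ab, u y_d)·a y_d·Δ((x_1,…,x_{n+1}),(y_1,…,y_{d−1}, b, y_{d+1},…,y_{n+1})). -/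
noncomputable section

open scoped Classical
open MvPolynomial

set_option maxHeartbeats 1000000
set_option synthInstance.maxHeartbeats 400000

/-- `p` lies on the right side of the oriented chord from `a` to `b`, where coinciding with
`a` or `b` is allowed: i.e. `p` lies on the closed arc from `a` to `b` in the anticlockwise
direction. -/
def onRightArc (a b p : Circle1) : Prop := p = a ∨ p = b ∨ coordAt a p < coordAt a b

/-- `p` lies strictly on the left side of the oriented chord from `a` to `b`: i.e. `p` lies
on the open arc from `b` to `a` in the anticlockwise direction. -/
def strictlyLeftArc (a b p : Circle1) : Prop := p ≠ a ∧ p ≠ b ∧ coordAt a b < coordAt a p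


lemma br_coord_lt (o p : Circle1) : 0 ≤ coordAt o p ∧ coordAt o p < 1 := by
  have := ((AddCircle.equivIco (1:ℝ) 0) (p - o)).2
  simpa [coordAt] using this

lemma br_coord_coe (o p : Circle1) : ((coordAt o p : ℝ) : Circle1) = p - o :=
  AddCircle.coe_equivIco

lemma br_coord_of (o p : Circle1) (r : ℝ) (h0 : 0 ≤ r) (h1 : r < 1)
    (h : ((r : ℝ) : Circle1) = p - o) : coordAt o p = r := by
  unfold coordAt
  rw [← h]
  exact AddCircle.equivIco_coe_of_mem (p := (1:ℝ)) (a := 0) (y := r) ⟨h0, by simpa using h1⟩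

lemma br_coord_inj (o p q : Circle1) (h : coordAt o p = coordAt o q) : p = q := by
  have h1 := br_coord_coe o p
  rw [h, br_coord_coe] at h1
  exact (sub_left_inj.mp h1).symm

lemma br_coord_change (o a p : Circle1) : coordAt a p =
    if coordAt o a ≤ coordAt o p then coordAt o p - coordAt o a
    else coordAt o p - coordAt o a + 1 := by
  have ha := br_coord_lt o a
  have hp := br_coord_lt o p
  split_ifs with h
  · apply br_coord_of
    · linarith
    · linarith
    · rw [AddCircle.coe_sub, br_coord_coe, br_coord_coe]; abel
  · apply br_coord_of
    · linarith
    · linarith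
    · rw [AddCircle.coe_add, AddCircle.coe_period, AddCircle.coe_sub, br_coord_coe,
        br_coord_coe]; abel

def brF (a b p : Circle1) : ℚ :=
  if p = a ∨ p = b then 0 else if coordAt a p < coordAt a b then -1/2 else 1/2

lemma br_F_eq (o a b p : Circle1) (hab : a ≠ b) :
    (1/2) * (sgnQ (coordAt o a - coordAt o b) * sgnQ (coordAt o a - coordAt o p)
        * sgnQ (coordAt o p - coordAt o b)) = brF a b p := by
  have ha := br_coord_lt o a
  have hb := br_coord_lt o b
  have hp := br_coord_lt o p
  unfold brF
  by_cases h1 : p = a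
  · subst h1; simp [sgnQ]
  by_cases h2 : p = b
  · subst h2; simp [sgnQ]
  rw [if_neg (by tauto), br_coord_change o a p, br_coord_change o a b]
  have e1 : coordAt o a ≠ coordAt o b := fun h => hab (br_coord_inj _ _ _ h)
  have e2 : coordAt o p ≠ coordAt o b := fun h => h2 (br_coord_inj _ _ _ h)
  have e3 : coordAt o p ≠ coordAt o a := fun h => h1 (br_coord_inj _ _ _ h)
  generalize coordAt o a = A at *
  generalize coordAt o b = B at *
  generalize coordAt o p = C at *
  unfold sgnQ
  rcases lt_or_gt_of_ne e1 with g1 | g1 <;> rcases lt_or_gt_of_ne e2 with g2 | g2 <;>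
    rcases lt_or_gt_of_ne e3 with g3 | g3 <;> split_ifs <;> first | (norm_num; done) | (exfalso; grind)

lemma br_link (a b s y : Circle1) (hab : a ≠ b) :
    linkQ a b s y = brF a b y - brF a b s := by
  unfold linkQ linkingAt
  rw [mul_sub, br_F_eq _ _ _ _ hab, br_F_eq _ _ _ _ hab]

lemma br_F_left (a b p : Circle1) (h : strictlyLeftArc a b p) : brF a b p = 1/2 := by
  obtain ⟨h1, h2, h3⟩ := h
  unfold brF
  rw [if_neg (by tauto), if_neg (by linarith)]

lemma br_leibniz_prod {K A ι : Type*} [CommRing K] [CommRing A] [Algebra K A] [DecidableEq ι]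
    (D : Derivation K A A) (s : Finset ι) (f : ι → A) :
    D (∏ i ∈ s, f i) = ∑ i ∈ s, (∏ j ∈ s.erase i, f j) * D (f i) := by
  induction s using Finset.induction_on with
  | empty => simp
  | insert a s ha ih =>
    rw [Finset.prod_insert ha, D.leibniz, ih, Finset.sum_insert ha, Finset.erase_insert ha,
      add_comm, smul_eq_mul, smul_eq_mul, Finset.mul_sum]
    congr 1
    apply Finset.sum_congr rfl
    intro i hi
    have : a ≠ i := fun h => ha (h ▸ hi)
    rw [Finset.erase_insert_of_ne this, Finset.prod_insert (by simp [ha])]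
    ring

lemma br_det {K A ι : Type*} [CommRing K] [CommRing A] [Algebra K A] [Fintype ι] [DecidableEq ι]
    (D : Derivation K A A) (M : Matrix ι ι A) :
    D M.det = ∑ i, (M.updateRow i (fun j => D (M i j))).det := by
  rw [← Matrix.det_transpose, Matrix.det_apply, map_sum]
  simp_rw [← Matrix.det_transpose (Matrix.updateRow _ _ _), Matrix.det_apply]
  rw [Finset.sum_comm]
  apply Finset.sum_congr rfl
  intro σ _
  rw [← Finset.smul_sum, Units.smul_def, map_zsmul, Units.smul_def, br_leibniz_prod]
  congr 1
  apply Finset.sum_congr rfl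
  intro i _
  rw [← Finset.mul_prod_erase _ _ (Finset.mem_univ i), mul_comm]
  congr 1
  · simp
  · apply Finset.prod_congr rfl
    intro j hj
    simp [Matrix.updateRow_ne (Finset.ne_of_mem_erase hj)]

lemma br_updateRow {A ι : Type*} [CommRing A] [Fintype ι] [DecidableEq ι] (M : Matrix ι ι A) (i : ι) (v : ι → A) :
    (M.updateRow i v).det = ∑ j, M.adjugate j i * v j := by
  rw [← Matrix.cramer_transpose_apply, Matrix.cramer_eq_adjugate_mulVec, ← Matrix.adjugate_transpose]
  rfl

lemma br_updateCol {A ι : Type*} [CommRing A] [Fintype ι] [DecidableEq ι] (M : Matrix ι ι A) (i : ι) (v : ι → A) :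
    (M.updateCol i v).det = ∑ j, M.adjugate i j * v j := by
  rw [← Matrix.cramer_apply, Matrix.cramer_eq_adjugate_mulVec]
  rfl

lemma br_gen_s2 (K : Type) [Field K] [CharZero K] (P : Set Circle1) (a b s t : ↥P) (hab : a ≠ b) :
    MvPolynomial.mkDerivation K (genBr K P 1 0 ⟨(a, b), hab⟩) (gen K P s t) =
      ((brF a b t : ℚ) - (brF a b s : ℚ) : K) • (gen K P a t * gen K P s b) := by
  classical
  have hab' : (a : Circle1) ≠ b := fun h => hab (Subtype.ext h)
  by_cases h : s = t
  · subst h; simp [gen]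
  · conv_lhs => rw [gen, dif_pos h, mkDerivation_X]
    simp [genBr, br_link _ _ _ _ hab', Rat.cast_sub]

/-- The swapping bracket of a generator `ab` with an
`(n+1)×(n+1)` determinant `Δ((x_1,…,x_{n+1}),(y_1,…,y_{n+1}))`, where the `x_i`
(resp. the `y_j`) are pairwise distinct and ordered anticlockwise, exactly
`x_1, …, x_l` and `y_1, …, y_k` lie on the (weak) right side of the oriented chord from
`a` to `b` while the remaining ones lie strictly on its left side, and `u` is any point
strictly on the left side.  (Families are indexed from `0`: `x i` denotes `x_{i+1}`.) -/
theorem bracket_with_determinant (K : Type) [Field K] [CharZero K] (P : Set Circle1)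
    (n : ℕ) (hn : 2 ≤ n)
    (x y : Fin (n+1) → ↥P) (a b : ↥P) (hab : (a : Circle1) ≠ (b : Circle1))
    (hx : AnticlockwiseList (List.ofFn fun i => ((x i : Circle1))))
    (hy : AnticlockwiseList (List.ofFn fun i => ((y i : Circle1))))
    (l k : ℕ) (hl : l ≤ n+1) (hk : k ≤ n+1)
    (hxr : ∀ i : Fin (n+1), (i : ℕ) < l → onRightArc (a : Circle1) (b : Circle1) (x i))
    (hxl : ∀ i : Fin (n+1), l ≤ (i : ℕ) → strictlyLeftArc (a : Circle1) (b : Circle1) (x i))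
    (hyr : ∀ i : Fin (n+1), (i : ℕ) < k → onRightArc (a : Circle1) (b : Circle1) (y i))
    (hyl : ∀ i : Fin (n+1), k ≤ (i : ℕ) → strictlyLeftArc (a : Circle1) (b : Circle1) (y i))
    (u : Circle1) (hu : strictlyLeftArc (a : Circle1) (b : Circle1) u) :
    swapBr K P 1 0 (gen K P a b) (Dmat K P (n+1) x y)
      = (∑ d : Fin (n+1), if (d : ℕ) < l then
            ((linkQ (a : Circle1) (b : Circle1) (x d : Circle1) u : ℚ) : K) •
              (gen K P (x d) b * Dmat K P (n+1) (Function.update x d a) y)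
          else 0)
        + (∑ d : Fin (n+1), if (d : ℕ) < k then
            ((linkQ (a : Circle1) (b : Circle1) u (y d : Circle1) : ℚ) : K) •
              (gen K P a (y d) * Dmat K P (n+1) x (Function.update y d b))
          else 0) := by
  have hab' : a ≠ b := fun h => hab (congrArg _ h)
  have hLx : ∀ d : Fin (n+1), (if (d : ℕ) < l then
            ((linkQ (a : Circle1) (b : Circle1) (x d : Circle1) u : ℚ) : K) •
              (gen K P (x d) b * Dmat K P (n+1) (Function.update x d a) y)
          else 0) = ((1/2 : K) - (brF a b (x d) : ℚ)) •
              (gen K P (x d) b * Dmat K P (n+1) (Function.update x d a) y) := by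
    intro d
    split_ifs with h
    · rw [br_link _ _ _ _ hab, br_F_left _ _ _ hu]; push_cast; rfl
    · rw [br_F_left _ _ _ (hxl d (not_lt.mp h))]; simp
  have hLy : ∀ d : Fin (n+1), (if (d : ℕ) < k then
            ((linkQ (a : Circle1) (b : Circle1) u (y d : Circle1) : ℚ) : K) •
              (gen K P a (y d) * Dmat K P (n+1) x (Function.update y d b))
          else 0) = ((brF a b (y d) : ℚ) - (1/2 : K)) •
              (gen K P a (y d) * Dmat K P (n+1) x (Function.update y d b)) := by
    intro d
    split_ifs with h
    · rw [br_link _ _ _ _ hab, br_F_left _ _ _ hu]; push_cast; rfl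
    · rw [br_F_left _ _ _ (hyl d (not_lt.mp h))]; simp
  simp_rw [hLx, hLy]
  set M : Matrix (Fin (n+1)) (Fin (n+1)) (SwapRing K P) :=
    Matrix.of fun i j => gen K P (x i) (y j) with hM
  have hrow : ∀ d, Dmat K P (n+1) (Function.update x d a) y
      = ∑ j, M.adjugate j d * gen K P a (y j) := by
    intro d
    rw [← br_updateRow, Dmat]
    congr 1
    ext1 i j
    by_cases h : i = d
    · subst h; simp
    · simp [Matrix.updateRow_ne h, h, hM]
  have hcol : ∀ d, Dmat K P (n+1) x (Function.update y d b)
      = ∑ i, M.adjugate d i * gen K P (x i) b := by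
    intro d
    rw [← br_updateCol, Dmat]
    congr 1
    ext1 i j
    by_cases h : j = d
    · subst h; simp
    · simp [Matrix.updateCol_ne h, h, hM]
  simp_rw [hrow, hcol]
  have hL : swapBr K P 1 0 (gen K P a b) (Dmat K P (n+1) x y) =
      ∑ i, ∑ j, M.adjugate j i * (((brF a b (y j) : ℚ) - (brF a b (x i) : ℚ) : K) •
        (gen K P a (y j) * gen K P (x i) b)) := by
    rw [swapBr]
    conv_lhs => rw [gen, dif_pos hab', mkDerivation_X]
    rw [Dmat, br_det]
    apply Finset.sum_congr rfl
    intro i _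
    rw [br_updateRow]
    apply Finset.sum_congr rfl
    intro j _
    rw [Matrix.of_apply, br_gen_s2]
  rw [hL]
  simp_rw [Finset.mul_sum, Finset.smul_sum]
  conv_rhs => rw [add_comm, Finset.sum_comm]
  rw [← Finset.sum_add_distrib]
  apply Finset.sum_congr rfl
  intro i _
  rw [← Finset.sum_add_distrib]
  apply Finset.sum_congr rfl
  intro j _
  simp only [MvPolynomial.smul_eq_C_mul, map_sub]
  ring

end
end

section
/- Let n > 1 and let x_1,…,x_n, y_1,…,y_n ∈ P be such that x_1,…,x_n are pairwise distinct and y_1,…,y_n are pairwise distinct. Then Δ((x_1,…,x_n),(y_1,…,y_n)) ≠ 0 in the rank n swapping ring Z_n(P). -/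
noncomputable section

open scoped Classical
open MvPolynomial

set_option maxHeartbeats 1000000
set_option synthInstance.maxHeartbeats 400000

lemma exists_avoid_perm {α : Type*} (n : ℕ) (hn : 2 ≤ n) (xs ys : Fin n → α)
    (hx : Function.Injective xs) (hy : Function.Injective ys) :
    ∃ σ : Equiv.Perm (Fin n), ∀ i, xs i ≠ ys (σ i) := by
  let f : Fin n → Fin n := fun i => if h : ∃ j, xs i = ys j then h.choose else i
  let s : Set (Fin n) := {i | ∃ j, xs i = ys j}
  have hf : ∀ i ∈ s, xs i = ys (f i) := by
    intro i hi
    have hi' : ∃ j, xs i = ys j := hi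
    simp only [f, dif_pos hi']
    exact hi'.choose_spec
  have hinj : Set.InjOn f s := by
    intro a ha b hb hab
    apply hx
    rw [hf a ha, hf b hb, hab]
  obtain ⟨g, hg⟩ := Set.MapsTo.exists_equiv_extend_of_card_eq
    (t := (Finset.univ : Finset (Fin n))) (s := s) (f := f) (by simp)
    (by intro i _; simp) hinj
  obtain ⟨m, rfl⟩ : ∃ m, n = m + 2 := ⟨n - 2, by omega⟩
  let τ : Fin (m+2) → Fin (m+2) := fun i => (g i : Fin (m+2))
  have hτ : Function.Injective τ := fun a b hab => g.injective (Subtype.ext hab)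
  have hρ : Function.Injective (fun i : Fin (m+2) => τ (i + 1)) := by
    intro a b hab
    exact add_right_cancel (hτ hab)
  refine ⟨Equiv.ofBijective _ (Finite.injective_iff_bijective.mp hρ), ?_⟩
  intro i h
  have h1 : xs i = ys (τ (i + 1)) := h
  have hi : i ∈ s := ⟨_, h1⟩
  have h2 : ys (τ i) = ys (τ (i + 1)) := by
    rw [← h1, hf i hi]
    exact congrArg ys (hg i hi)
  have h3 := hτ (hy h2)
  simp at h3

/-- Evaluation of generators at `t` times a matrix with zero diagonal. -/
def evT (K : Type) [Field K] (P : Set Circle1) (A : ↥P → ↥P → K) :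
    SwapRing K P →+* Polynomial K :=
  MvPolynomial.eval₂Hom Polynomial.C
    (fun g : SwapIdx P => Polynomial.X * Polynomial.C (A g.1.1 g.1.2))

lemma evT_Dmat (K : Type) [Field K] (P : Set Circle1) (A : ↥P → ↥P → K)
    (hA : ∀ x, A x x = 0) (m : ℕ) (xs ys : Fin m → ↥P) :
    evT K P A (Dmat K P m xs ys) =
      Polynomial.X ^ m * Polynomial.C (Matrix.det (Matrix.of fun i j => A (xs i) (ys j))) := by
  have key : ∀ x y, evT K P A (gen K P x y) = Polynomial.X * Polynomial.C (A x y) := by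
    intro x y
    by_cases h : x = y
    · subst h
      simp [gen, hA]
    · simp [gen, h, evT]
  rw [Dmat, RingHom.map_det, RingHom.map_det]
  have : (evT K P A).mapMatrix (Matrix.of fun i j => gen K P (xs i) (ys j)) =
      (Polynomial.X : Polynomial K) •
        (Polynomial.C).mapMatrix (Matrix.of fun i j => A (xs i) (ys j)) := by
    ext1 i j
    simp [key]
  rw [this, Matrix.det_smul, Fintype.card_fin]

/-- For `n > 1` and pairwise distinct `x_1, …, x_n ∈ P` and pairwise
distinct `y_1, …, y_n ∈ P`, the determinant `Δ((x_1,…,x_n),(y_1,…,y_n))` is nonzero in the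
rank `n` swapping ring `Z_n(P)`. -/
theorem determinant_ne_zero (K : Type) [Field K] [CharZero K] (P : Set Circle1)
    (n : ℕ) (hn : 2 ≤ n) (xs ys : Fin n → ↥P)
    (hx : Function.Injective xs) (hy : Function.Injective ys) :
    toZn K P n (Dmat K P n xs ys) ≠ 0 := by
  obtain ⟨σ, hσ⟩ := exists_avoid_perm n hn xs ys hx hy
  let A : ↥P → ↥P → K := fun x y => if ∃ i, x = xs i ∧ y = ys (σ i) then 1 else 0
  have hA : ∀ x, A x x = 0 := by
    intro x
    refine if_neg ?_
    rintro ⟨i, h1, h2⟩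
    exact hσ i (h1.symm.trans h2)
  have hdet : Matrix.det (Matrix.of fun i j => A (xs i) (ys j)) ≠ 0 := by
    have : (Matrix.of fun i j => A (xs i) (ys j)) = (Equiv.toPEquiv σ).toMatrix := by
      ext i j
      have h : (∃ k, xs i = xs k ∧ ys j = ys (σ k)) ↔ σ i = j := by
        constructor
        · rintro ⟨k, h1, h2⟩
          rw [hx h1, hy h2]
        · rintro rfl
          exact ⟨i, rfl, rfl⟩
      simp [A, h, PEquiv.toMatrix_apply]
    rw [this, Matrix.det_permutation]
    rcases Int.units_eq_one_or (Equiv.Perm.sign σ) with h | h <;> simp [h]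
  intro h0
  have hmem : Dmat K P n xs ys ∈ Rideal K P n := Ideal.Quotient.eq_zero_iff_mem.mp h0
  have hle : Rideal K P n ≤
      (Ideal.span {(Polynomial.X : Polynomial K) ^ (n+1)}).comap (evT K P A) := by
    refine Ideal.span_le.mpr ?_
    rintro D ⟨as, bs, rfl⟩
    simp only [SetLike.mem_coe, Ideal.mem_comap]
    rw [evT_Dmat K P A hA, Ideal.mem_span_singleton]
    exact dvd_mul_right _ _
  have h1 := hle hmem
  rw [Ideal.mem_comap, evT_Dmat K P A hA, Ideal.mem_span_singleton,
    Polynomial.X_pow_dvd_iff] at h1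
  have h2 := h1 n (Nat.lt_succ_self n)
  simp only [Polynomial.coeff_mul_C, Polynomial.coeff_X_pow_self, one_mul] at h2
  exact hdet h2

end
end
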